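/- arXiv:2108.09005 — 5 statements merged into one kernel-verified Lean document; each statement's English description precedes it below -/
import Mathlib

section
/- Let ν₀ = N(m₀, σ₀²) and ν₁ = N(m₁, σ₁²) be Gaussian measures on ℝ with σ₀, σ₁ > 0 and σ₀ ≠ σ₁. Then the classification error of the 1D QDA rule φ equals 𝓔((m₀ − m₁)/σ₁, σ₀/σ₁). -/
open MeasureTheory ProbabilityTheory Matrix Filter Set

noncomputable def Phi (t : ℝ) : ℝ := ((gaussianReal 0 1) (Set.Iic t)).toReal
noncomputable def calE (r g : ℝ) : ℝ :=
  if g = 1 then Phi (-(|r| / 2))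
  else
    1/2
      + (1/2) * Phi ((r - g * Real.sqrt (r^2 + (g^2 - 1) * Real.log (g^2))) / (g^2 - 1))
      - (1/2) * Phi ((r + g * Real.sqrt (r^2 + (g^2 - 1) * Real.log (g^2))) / (g^2 - 1))
      + (1/2) * Phi ((r * g + Real.sqrt (r^2 + (g^2 - 1) * Real.log (g^2))) / (g^2 - 1))
      - (1/2) * Phi ((r * g - Real.sqrt (r^2 + (g^2 - 1) * Real.log (g^2))) / (g^2 - 1))
noncomputable def qdaDelta (m σ : ℝ) (x : ℝ) : ℝ :=
  -(1/2) * Real.log (σ^2) - (x - m)^2 / (2 * σ^2) + Real.log (1/2)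

noncomputable def qdaRule (m0 σ0 m1 σ1 : ℝ) (x : ℝ) : ℕ :=
  if qdaDelta m0 σ0 x < qdaDelta m1 σ1 x then 1 else 0

noncomputable def classError (m0 σ0 m1 σ1 : ℝ) : ℝ :=
  (1/2) * ((gaussianReal m0 (σ0^2).toNNReal) {x | qdaRule m0 σ0 m1 σ1 x = 1}).toReal
  + (1/2) * ((gaussianReal m1 (σ1^2).toNNReal) {x | qdaRule m0 σ0 m1 σ1 x = 0}).toReal

lemma my_nonneg {c x : ℝ} (hc : c < 0) : 0 ≤ c * x ↔ x ≤ 0 := by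
  constructor <;> intro h
  · by_contra! h'
    nlinarith
  · nlinarith

lemma my_neg {c x : ℝ} (hc : 0 < c) : c * x < 0 ↔ x < 0 := by
  constructor <;> intro h
  · by_contra! h'
    nlinarith
  · nlinarith

lemma phi_Ioc (a b : ℝ) (h : a ≤ b) :
    (gaussianReal 0 1).real (Ioc a b) = Phi b - Phi a := by
  have e : Ioc a b = Iic b \ Iic a := by
    ext x; simp only [mem_Ioc, mem_diff, mem_Iic, not_le]; tauto
  rw [e, measureReal_diff (Iic_subset_Iic.2 h) measurableSet_Iic]
  rfl

lemma quad_measure (c b d t : ℝ) (hc : c ≠ 0) (ht : 0 ≤ t) (hd : b ^ 2 - c * d = t ^ 2) :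
    (gaussianReal 0 1).real {w | c * w ^ 2 - 2 * b * w + d < 0}
      = (if c < 0 then 1 else 0) + Phi ((b + t) / c) - Phi ((b - t) / c) := by
  haveI : NullSingletonClass (gaussianReal 0 1) := nullSingletonClass_gaussianReal one_ne_zero
  have key : ∀ w, c * w ^ 2 - 2 * b * w + d = c * ((w - (b - t) / c) * (w - (b + t) / c)) := by
    intro w
    field_simp
    linear_combination -hd
  simp_rw [key]
  rcases lt_or_gt_of_ne hc with hc | hc
  · have hle : (b + t) / c ≤ (b - t) / c := (div_le_div_right_of_neg hc).2 (by linarith)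
    have e : {w | c * ((w - (b - t) / c) * (w - (b + t) / c)) < 0}
        = (Icc ((b + t) / c) ((b - t) / c))ᶜ := by
      ext w
      simp only [mem_setOf_eq, mem_compl_iff, mem_Icc]
      rw [← not_le, not_iff_not, my_nonneg hc]
      constructor
      · intro h
        constructor <;> by_contra! h' <;> nlinarith
      · rintro ⟨h1, h2⟩
        nlinarith
    rw [e, probReal_compl_eq_one_sub measurableSet_Icc,
      ← measureReal_congr (Ioc_ae_eq_Icc), phi_Ioc _ _ hle, if_pos hc]
    ring
  · have hle : (b - t) / c ≤ (b + t) / c := (div_le_div_iff_of_pos_right hc).2 (by linarith)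
    have e : {w | c * ((w - (b - t) / c) * (w - (b + t) / c)) < 0}
        = Ioo ((b - t) / c) ((b + t) / c) := by
      ext w
      simp only [mem_setOf_eq, mem_Ioo]
      rw [my_neg hc]
      constructor
      · intro h
        constructor <;> by_contra! h' <;> nlinarith
      · rintro ⟨h1, h2⟩
        nlinarith
    rw [e, measureReal_congr (Ioo_ae_eq_Ioc), phi_Ioc _ _ hle, if_neg hc.le.not_gt]
    ring

lemma gauss_std (m σ : ℝ) : gaussianReal m (σ ^ 2).toNNReal
    = (gaussianReal 0 1).map (fun w => m - σ * w) := by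
  have : (fun w => m - σ * w) = (fun x => m - x) ∘ (fun w => σ * w) := rfl
  rw [this, ← Measure.map_map (by fun_prop) (by fun_prop), gaussianReal_map_const_mul,
    gaussianReal_map_const_sub]
  congr 1
  · simp
  · rw [mul_one]; ext; simp [sq_nonneg]

lemma rule_one_iff (m0 m1 σ0 σ1 x : ℝ) (h0 : 0 < σ0) (h1 : 0 < σ1) :
    qdaRule m0 σ0 m1 σ1 x = 1 ↔
      ((x - m1) / σ1) ^ 2 - ((x - m0) / σ0) ^ 2 - Real.log ((σ0 / σ1) ^ 2) < 0 := by
  have e : qdaDelta m0 σ0 x - qdaDelta m1 σ1 x =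
      (1/2) * (((x - m1) / σ1) ^ 2 - ((x - m0) / σ0) ^ 2 - Real.log ((σ0 / σ1) ^ 2)) := by
    unfold qdaDelta
    rw [div_pow σ0, Real.log_div (x := σ0 ^ 2) (y := σ1 ^ 2) (by positivity) (by positivity)]
    field_simp
    ring
  unfold qdaRule
  split_ifs with h
  · simp only [true_iff]; linarith
  · simp only [zero_ne_one, false_iff]; linarith

/-- For Gaussian classes with σ₀ ≠ σ₁, the classification error of the 1D QDA rule
equals 𝓔((m₀ − m₁)/σ₁, σ₀/σ₁). -/
theorem error_unequal_variance (m0 m1 σ0 σ1 : ℝ) (h0 : 0 < σ0) (h1 : 0 < σ1)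
    (hne : σ0 ≠ σ1) :
    classError m0 σ0 m1 σ1 = calE ((m0 - m1) / σ1) (σ0 / σ1) := by
  obtain ⟨r, hr⟩ : ∃ r, r = (m0 - m1) / σ1 := ⟨_, rfl⟩
  obtain ⟨g, hg⟩ : ∃ g, g = σ0 / σ1 := ⟨_, rfl⟩
  have hm : m0 = m1 + r * σ1 := by rw [hr]; field_simp; ring
  have hs : σ0 = g * σ1 := by rw [hg]; field_simp
  have hgpos : 0 < g := by rw [hg]; positivity
  have hg1 : g ≠ 1 := by rintro rfl; apply hne; linarith
  have hc : g ^ 2 - 1 ≠ 0 := by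
    intro h
    have : (g - 1) * (g + 1) = 0 := by linarith
    rcases mul_eq_zero.1 this with h | h
    · exact hg1 (by linarith)
    · linarith
  have hL : 0 ≤ (g ^ 2 - 1) * Real.log (g ^ 2) := by
    rcases le_total 1 (g ^ 2) with h | h
    · exact mul_nonneg (by linarith) (Real.log_nonneg h)
    · exact mul_nonneg_of_nonpos_of_nonpos (by linarith) (Real.log_nonpos (by positivity) h)
  have hD : 0 ≤ r ^ 2 + (g ^ 2 - 1) * Real.log (g ^ 2) := by positivity
  have hiff : ∀ x, qdaRule m0 σ0 m1 σ1 x = 1 ↔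
      ((x - m1) / σ1) ^ 2 - ((x - m0) / σ0) ^ 2 - Real.log (g ^ 2) < 0 := by
    intro x; rw [hg]; exact rule_one_iff m0 m1 σ0 σ1 x h0 h1
  have hmeas : MeasurableSet {x | qdaRule m0 σ0 m1 σ1 x = 1} := by
    simp_rw [hiff]
    exact measurableSet_lt (by fun_prop) (by fun_prop)
  have hcompl : {x | qdaRule m0 σ0 m1 σ1 x = 0} = {x | qdaRule m0 σ0 m1 σ1 x = 1}ᶜ := by
    ext x
    simp only [mem_setOf_eq, mem_compl_iff, qdaRule]
    split_ifs <;> simp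
  unfold classError calE
  rw [← hr, ← hg, if_neg hg1, hcompl]
  set s := Real.sqrt (r ^ 2 + (g ^ 2 - 1) * Real.log (g ^ 2)) with hsdef
  have hs0 : 0 ≤ s := Real.sqrt_nonneg _
  have hs2 : s ^ 2 = r ^ 2 + (g ^ 2 - 1) * Real.log (g ^ 2) := Real.sq_sqrt hD
  rw [← measureReal_def, ← measureReal_def, probReal_compl_eq_one_sub hmeas, gauss_std, gauss_std,
    map_measureReal_apply (by fun_prop) hmeas, map_measureReal_apply (by fun_prop) hmeas]
  have e0 : (fun w => m0 - σ0 * w) ⁻¹' {x | qdaRule m0 σ0 m1 σ1 x = 1}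
      = {w | (g ^ 2 - 1) * w ^ 2 - 2 * (r * g) * w + (r ^ 2 - Real.log (g ^ 2)) < 0} := by
    ext w
    simp only [mem_preimage, mem_setOf_eq, hiff]
    have a1 : (m0 - σ0 * w - m1) / σ1 = r - g * w := by rw [hm, hs]; field_simp; ring
    have a2 : (m0 - σ0 * w - m0) / σ0 = - w := by field_simp; ring
    rw [a1, a2]
    constructor <;> intro h <;> linarith
  have e1 : (fun w => m1 - σ1 * w) ⁻¹' {x | qdaRule m0 σ0 m1 σ1 x = 1}
      = {w | (g ^ 2 - 1) * w ^ 2 - 2 * r * w + (- r ^ 2 - g ^ 2 * Real.log (g ^ 2)) < 0} := by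
    ext w
    simp only [mem_preimage, mem_setOf_eq, hiff]
    have a1 : (m1 - σ1 * w - m1) / σ1 = - w := by field_simp; ring
    have a2 : (m1 - σ1 * w - m0) / σ0 = - (w + r) / g := by rw [hm, hs]; field_simp; ring
    have a3 : (g ^ 2 - 1) * w ^ 2 - 2 * r * w + (- r ^ 2 - g ^ 2 * Real.log (g ^ 2))
      = g ^ 2 * ((-w) ^ 2 - (- (w + r) / g) ^ 2 - Real.log (g ^ 2)) := by
      field_simp; ring
    rw [a1, a2, a3, my_neg (by positivity)]
  rw [e0, e1, quad_measure _ _ _ s hc hs0 (by rw [hs2]; ring),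
    quad_measure _ _ _ (g * s) hc (by positivity) (by rw [mul_pow, hs2]; ring)]
  split_ifs <;> ring
end

section
/- Suppose σ₀ > σ₁ > 0. Then Δ > 0, and the set {x ∈ ℝ : δ₀(x) > δ₁(x)} equals (−∞, r₁) ∪ (r₂, ∞), where r₁ = ((m₁σ₀² − m₀σ₁²) − σ₀σ₁√Δ)/(σ₀² − σ₁²) and r₂ = ((m₁σ₀² − m₀σ₁²) + σ₀σ₁√Δ)/(σ₀² − σ₁²). -/
open MeasureTheory ProbabilityTheory Matrix Filter Set

/-- If σ₀ > σ₁ > 0 then Δ > 0 and {x : δ₀(x) > δ₁(x)} = (−∞, r₁) ∪ (r₂, ∞). -/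
theorem qda_region (m0 m1 σ0 σ1 : ℝ) (h1 : 0 < σ1) (h01 : σ1 < σ0) :
    0 < (m0 - m1)^2 + (σ0^2 - σ1^2) * Real.log (σ0^2 / σ1^2) ∧
    {x : ℝ | qdaDelta m1 σ1 x < qdaDelta m0 σ0 x} =
      Set.Iio (((m1 * σ0^2 - m0 * σ1^2) -
          σ0 * σ1 * Real.sqrt ((m0 - m1)^2 + (σ0^2 - σ1^2) * Real.log (σ0^2 / σ1^2))) /
          (σ0^2 - σ1^2)) ∪
      Set.Ioi (((m1 * σ0^2 - m0 * σ1^2) +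
          σ0 * σ1 * Real.sqrt ((m0 - m1)^2 + (σ0^2 - σ1^2) * Real.log (σ0^2 / σ1^2))) /
          (σ0^2 - σ1^2)) := by
  have h0 : 0 < σ0 := h1.trans h01
  have hD : 0 < σ0^2 - σ1^2 := by nlinarith
  have hs1 : 0 < σ1^2 := by positivity
  have hs0 : 0 < σ0^2 := by positivity
  have hL : 0 < Real.log (σ0^2 / σ1^2) := by
    apply Real.log_pos
    rw [lt_div_iff₀ hs1]
    linarith
  have hlog : Real.log (σ0^2 / σ1^2) = Real.log (σ0^2) - Real.log (σ1^2) :=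
    Real.log_div hs0.ne' hs1.ne'
  have hΔ : 0 < (m0 - m1)^2 + (σ0^2 - σ1^2) * Real.log (σ0^2 / σ1^2) := by positivity
  refine ⟨hΔ, ?_⟩
  have hsq := Real.sq_sqrt hΔ.le
  have hsp := Real.sqrt_nonneg ((m0 - m1)^2 + (σ0^2 - σ1^2) * Real.log (σ0^2 / σ1^2))
  generalize Real.sqrt ((m0 - m1)^2 + (σ0^2 - σ1^2) * Real.log (σ0^2 / σ1^2)) = s at *
  ext x
  simp only [Set.mem_setOf_eq, Set.mem_union, Set.mem_Iio, Set.mem_Ioi]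
  rw [lt_div_iff₀ hD, div_lt_iff₀ hD]
  have key : (qdaDelta m0 σ0 x - qdaDelta m1 σ1 x) * (2 * σ0^2 * σ1^2 * (σ0^2 - σ1^2))
      = (x * (σ0^2 - σ1^2) - (m1 * σ0^2 - m0 * σ1^2))^2 - (σ0 * σ1 * s)^2 := by
    rw [mul_pow, hsq, hlog]
    unfold qdaDelta
    field_simp
    ring
  have hP : 0 < 2 * σ0^2 * σ1^2 * (σ0^2 - σ1^2) := by positivity
  have hc : 0 ≤ σ0 * σ1 * s := by positivity
  rw [← sub_pos, ← mul_pos_iff_of_pos_right hP, key, sub_pos, sq_lt_sq, abs_of_nonneg hc, lt_abs]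
  constructor
  · rintro (h | h)
    · right; linarith
    · left; linarith
  · rintro (h | h)
    · right; linarith
    · left; linarith
end

section
/- For every (r, g) ∈ ℝ × (0, ∞), the value 𝓔(r, g) lies in the half-open interval (0, 1/2], i.e. 0 < 𝓔(r, g) ≤ 1/2; moreover if g ≠ 1 then 𝓔(r, g) < 1/2. -/
open MeasureTheory ProbabilityTheory Matrix Filter Set

lemma Phi_eq (t : ℝ) : Phi t = ∫ x in Iic t, gaussianPDFReal 0 1 x := by
  unfold Phi
  rw [gaussianReal_apply_eq_integral 0 one_ne_zero, ENNReal.toReal_ofReal]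
  exact integral_nonneg (fun x => gaussianPDFReal_nonneg 0 1 x)

lemma pdf_eq (x : ℝ) : gaussianPDFReal 0 1 x = (√(2 * Real.pi))⁻¹ * Real.exp (-x ^ 2 / 2) := by
  simp [gaussianPDFReal]

lemma pdf_cont : Continuous (gaussianPDFReal 0 1) := by
  have : gaussianPDFReal 0 1 = fun x => (√(2 * Real.pi))⁻¹ * Real.exp (-x ^ 2 / 2) := by
    ext x; exact pdf_eq x
  rw [this]; fun_prop

lemma Phi_hasDerivAt (t : ℝ) : HasDerivAt Phi (gaussianPDFReal 0 1 t) t := by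
  have hi := integrable_gaussianPDFReal 0 1
  have h : Phi = fun t => Phi 0 + ∫ x in (0:ℝ)..t, gaussianPDFReal 0 1 x := by
    ext s
    rw [Phi_eq, Phi_eq, ← intervalIntegral.integral_Iic_sub_Iic hi.integrableOn hi.integrableOn]
    ring
  rw [h]
  exact (pdf_cont.integral_hasStrictDerivAt 0 t).hasDerivAt.const_add _

lemma Phi_strictMono : StrictMono Phi := by
  apply strictMono_of_deriv_pos
  intro x
  rw [(Phi_hasDerivAt x).deriv]
  exact gaussianPDFReal_pos 0 1 x one_ne_zero

lemma Phi_pos (t : ℝ) : 0 < Phi t :=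
  lt_of_le_of_lt ENNReal.toReal_nonneg (Phi_strictMono (sub_one_lt t))

lemma Phi_lt_one (t : ℝ) : Phi t < 1 := by
  refine lt_of_lt_of_le (Phi_strictMono (lt_add_one t)) ?_
  exact measureReal_le_one (μ := gaussianReal 0 1)

lemma Phi_neg (t : ℝ) : Phi (-t) = 1 - Phi t := by
  have h1 : (gaussianReal 0 1) (Iic (-t)) = (gaussianReal 0 1) (Ici t) := by
    have h := gaussianReal_map_neg (μ := 0) (v := 1)
    rw [neg_zero] at h
    conv_lhs => rw [← h]
    rw [Measure.map_apply measurable_neg measurableSet_Iic]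
    congr 1
    ext x; simp
  have : NullSingletonClass (gaussianReal 0 1) := nullSingletonClass_gaussianReal one_ne_zero
  have h2 : (gaussianReal 0 1) (Ici t) = (gaussianReal 0 1) (Ioi t) :=
    (measure_congr Ioi_ae_eq_Ici).symm
  have h3 := probReal_compl_eq_one_sub (μ := gaussianReal 0 1) (measurableSet_Iic (a := t))
  rw [compl_Iic] at h3
  unfold Phi
  rw [h1, h2]
  exact h3

lemma Phi_le_half {t : ℝ} (ht : t ≤ 0) : Phi t ≤ 1 / 2 := by
  have h := Phi_neg t
  have h2 := Phi_strictMono.monotone (show t ≤ -t by linarith)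
  linarith

lemma h_deriv (r g y : ℝ) : HasDerivAt (fun y => Phi (g * y - r) - Phi y)
    (gaussianPDFReal 0 1 (g * y - r) * g - gaussianPDFReal 0 1 y) y := by
  have h1 : HasDerivAt (fun y => g * y - r) g y := by
    simpa using ((hasDerivAt_id y).const_mul g).sub_const r
  exact ((Phi_hasDerivAt (g * y - r)).comp y h1).sub (Phi_hasDerivAt y)

lemma pdf_scaled (r g y : ℝ) (hg : 0 < g) : gaussianPDFReal 0 1 (g * y - r) * g =
    (√(2 * Real.pi))⁻¹ * Real.exp (-(g * y - r) ^ 2 / 2 + Real.log g) := by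
  rw [pdf_eq, Real.exp_add, Real.exp_log hg]; ring

lemma h_mono (r g c d : ℝ) (hg : 0 < g) (hcd : c < d)
    (H : ∀ y ∈ Ioo c d, (g * y - r) ^ 2 - y ^ 2 < 2 * Real.log g) :
    Phi (g * c - r) - Phi c < Phi (g * d - r) - Phi d := by
  have : StrictMonoOn (fun y => Phi (g * y - r) - Phi y) (Icc c d) := by
    apply strictMonoOn_of_deriv_pos (convex_Icc c d)
    · exact fun y _ => (h_deriv r g y).continuousAt.continuousWithinAt
    · intro y hy
      rw [interior_Icc] at hy
      rw [(h_deriv r g y).deriv, pdf_scaled r g y hg, pdf_eq, sub_pos]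
      apply mul_lt_mul_of_pos_left _ (by positivity)
      apply Real.exp_lt_exp.2
      linarith [H y hy]
  exact this (left_mem_Icc.2 hcd.le) (right_mem_Icc.2 hcd.le) hcd

lemma h_anti (r g c d : ℝ) (hg : 0 < g) (hcd : c < d)
    (H : ∀ y ∈ Ioo c d, 2 * Real.log g < (g * y - r) ^ 2 - y ^ 2) :
    Phi (g * d - r) - Phi d < Phi (g * c - r) - Phi c := by
  have : StrictAntiOn (fun y => Phi (g * y - r) - Phi y) (Icc c d) := by
    apply strictAntiOn_of_deriv_neg (convex_Icc c d)
    · exact fun y _ => (h_deriv r g y).continuousAt.continuousWithinAt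
    · intro y hy
      rw [interior_Icc] at hy
      rw [(h_deriv r g y).deriv, pdf_scaled r g y hg, pdf_eq, sub_neg]
      apply mul_lt_mul_of_pos_left _ (by positivity)
      apply Real.exp_lt_exp.2
      linarith [H y hy]
  exact this (left_mem_Icc.2 hcd.le) (right_mem_Icc.2 hcd.le) hcd

/-- 𝓔(r,g) ∈ (0, 1/2] for all r ∈ ℝ, g > 0; and 𝓔(r,g) < 1/2 when g ≠ 1. -/
theorem calE_mem_Ioc (r g : ℝ) (hg : 0 < g) :
    (0 < calE r g ∧ calE r g ≤ 1/2) ∧ (g ≠ 1 → calE r g < 1/2) := by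
  by_cases h1 : g = 1
  · refine ⟨?_, fun h => absurd h1 h⟩
    unfold calE
    rw [if_pos h1]
    exact ⟨Phi_pos _, Phi_le_half (by have := abs_nonneg r; linarith)⟩
  suffices h : 0 < calE r g ∧ calE r g < 1/2 from ⟨⟨h.1, h.2.le⟩, fun _ => h.2⟩
  unfold calE
  rw [if_neg h1]
  have hL : Real.log (g ^ 2) = 2 * Real.log g := by rw [Real.log_pow]; norm_num
  rw [hL]
  have hpos : 0 < (g ^ 2 - 1) * (2 * Real.log g) := by
    rcases lt_or_gt_of_ne h1 with h | h
    · exact mul_pos_of_neg_of_neg (by nlinarith) (by linarith [Real.log_neg hg h])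
    · exact mul_pos (by nlinarith) (by linarith [Real.log_pos h])
  have hΔ : 0 < r ^ 2 + (g ^ 2 - 1) * (2 * Real.log g) := by positivity
  have hD2 := Real.sq_sqrt hΔ.le
  have hD := Real.sqrt_pos.2 hΔ
  set D := √(r ^ 2 + (g ^ 2 - 1) * (2 * Real.log g)) with hDdef
  clear_value D
  have hk : g ^ 2 - 1 ≠ 0 := by
    intro h
    rw [h] at hpos; simp at hpos
  have ea : (r - g * D) / (g ^ 2 - 1) = g * ((r * g - D) / (g ^ 2 - 1)) - r := by
    field_simp; ring
  have eb : (r + g * D) / (g ^ 2 - 1) = g * ((r * g + D) / (g ^ 2 - 1)) - r := by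
    field_simp; ring
  rw [ea, eb]
  set c := (r * g - D) / (g ^ 2 - 1) with hc
  set d := (r * g + D) / (g ^ 2 - 1) with hd
  have hcm : c * (g ^ 2 - 1) = r * g - D := by rw [hc]; field_simp
  have hdm : d * (g ^ 2 - 1) = r * g + D := by rw [hd]; field_simp
  clear_value c d
  have key : ∀ y, (g ^ 2 - 1) * ((g * y - r) ^ 2 - y ^ 2 - 2 * Real.log g)
      = (y * (g ^ 2 - 1) - c * (g ^ 2 - 1)) * (y * (g ^ 2 - 1) - d * (g ^ 2 - 1)) := by
    intro y
    rw [hcm, hdm]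
    linear_combination hD2
  have key2 : ∀ y, (g * y - r) ^ 2 - y ^ 2 - 2 * Real.log g
      = (g ^ 2 - 1) * ((y - c) * (y - d)) := by
    intro y
    apply mul_left_cancel₀ hk
    rw [key]; ring
  have p1 := Phi_pos (g * c - r)
  have p2 := Phi_pos (g * d - r)
  have p3 := Phi_lt_one (g * c - r)
  have p4 := Phi_lt_one (g * d - r)
  have p5 := Phi_pos c
  have p6 := Phi_pos d
  have p7 := Phi_lt_one c
  have p8 := Phi_lt_one d
  rcases lt_or_gt_of_ne h1 with h | h
  · have hk' : g ^ 2 - 1 < 0 := by nlinarith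
    have hdc : d < c := by nlinarith
    have hm := h_anti r g d c hg hdc (fun y hy => by
      have := key2 y
      have h2 : (y - c) * (y - d) < 0 :=
        mul_neg_of_neg_of_pos (by linarith [hy.2]) (by linarith [hy.1])
      have := mul_pos_of_neg_of_neg hk' h2
      linarith)
    have q := Phi_strictMono (show g * d - r < g * c - r by nlinarith)
    constructor <;> linarith
  · have hk' : 0 < g ^ 2 - 1 := by nlinarith
    have hdc : c < d := by nlinarith
    have hm := h_mono r g c d hg hdc (fun y hy => by
      have := key2 y
      have h2 : (y - c) * (y - d) < 0 :=
        mul_neg_of_pos_of_neg (by linarith [hy.1]) (by linarith [hy.2])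
      have := mul_neg_of_pos_of_neg hk' h2
      linarith)
    have q := Phi_strictMono hdc
    constructor <;> linarith
end

section
/- The classification error function E is continuous on ℝ^p \ {0}. -/
open MeasureTheory ProbabilityTheory Matrix Filter Set

noncomputable def Evec {p : ℕ} (μ0 μ1 : Fin p → ℝ) (S0 S1 : Matrix (Fin p) (Fin p) ℝ)
    (α : Fin p → ℝ) : ℝ :=
  calE ((dotProduct α μ0 - dotProduct α μ1) / Real.sqrt (dotProduct α (S1.mulVec α)))
    (Real.sqrt (dotProduct α (S0.mulVec α)) / Real.sqrt (dotProduct α (S1.mulVec α)))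

lemma gauss_le_volume (s : Set ℝ) : gaussianReal 0 1 s ≤ volume s := by
  rw [gaussianReal_apply 0 one_ne_zero]
  calc ∫⁻ x in s, gaussianPDF 0 1 x ≤ ∫⁻ x in s, 1 := by
        apply lintegral_mono
        intro x
        simp only [gaussianPDF, gaussianPDFReal]
        rw [ENNReal.ofReal_le_one]
        have h1 : (Real.sqrt (2 * Real.pi * ((1 : NNReal) : ℝ)))⁻¹ ≤ 1 := by
          apply inv_le_one_of_one_le₀
          rw [Real.one_le_sqrt]
          have := Real.pi_gt_three
          simp; linarith
        have h2 : Real.exp (-(x - 0) ^ 2 / (2 * ((1 : NNReal) : ℝ))) ≤ 1 := by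
          rw [Real.exp_le_one_iff]
          have := sq_nonneg (x - 0)
          simp only [NNReal.coe_one]
          linarith
        exact mul_le_one₀ h1 (Real.exp_nonneg _) h2
    _ = volume s := by simp

lemma Phi_mono {a b : ℝ} (h : a ≤ b) : Phi a ≤ Phi b :=
  ENNReal.toReal_mono (measure_ne_top _ _) (measure_mono (Set.Iic_subset_Iic.2 h))

lemma Phi_sub_le {a b : ℝ} (h : a ≤ b) : Phi b ≤ Phi a + (b - a) := by
  have h1 : gaussianReal 0 1 (Set.Iic b) ≤ gaussianReal 0 1 (Set.Iic a) + ENNReal.ofReal (b - a) := by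
    rw [← Set.Iic_union_Ioc_eq_Iic h]
    refine (measure_union_le _ _).trans ?_
    gcongr
    exact (gauss_le_volume _).trans (by simp)
  have h2 := ENNReal.toReal_mono (by finiteness) h1
  rw [ENNReal.toReal_add (by finiteness) (by finiteness), ENNReal.toReal_ofReal (by linarith)] at h2
  exact h2

lemma Phi_abs_sub_le (a b : ℝ) : |Phi a - Phi b| ≤ |a - b| := by
  rcases le_total a b with h | h
  · have h1 := Phi_mono h
    have h2 := Phi_sub_le h
    rw [abs_of_nonpos (by linarith), abs_of_nonpos (by linarith)]; linarith
  · have h1 := Phi_mono h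
    have h2 := Phi_sub_le h
    rw [abs_of_nonneg (by linarith), abs_of_nonneg (by linarith)]; linarith

lemma Phi_cont : Continuous Phi := by
  have : LipschitzWith 1 Phi := by
    apply LipschitzWith.of_dist_le_mul
    intro x y
    simpa [Real.dist_eq] using Phi_abs_sub_le x y
  exact this.continuous

lemma calE_neg (r g : ℝ) : calE (-r) g = calE r g := by
  unfold calE
  split_ifs with h
  · simp
  · rw [neg_sq]
    set s := Real.sqrt (r^2 + (g^2 - 1) * Real.log (g^2))
    rw [show (-r - g * s) / (g^2-1) = -((r + g * s) / (g^2-1)) by ring,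
      show (-r + g * s) / (g^2-1) = -((r - g * s) / (g^2-1)) by ring,
      show (-r * g + s) / (g^2-1) = -((r * g - s) / (g^2-1)) by ring,
      show (-r * g - s) / (g^2-1) = -((r * g + s) / (g^2-1)) by ring]
    simp only [Phi_neg]
    ring

lemma calE_abs (r g : ℝ) : calE |r| g = calE r g := by
  rcases abs_choice r with h | h <;> rw [h]
  exact calE_neg r g

lemma Phi_diff_tendsto {ι : Type*} {l : Filter ι} {u v : ι → ℝ}
    (h : Tendsto (fun i => u i - v i) l (nhds 0)) :
    Tendsto (fun i => Phi (u i) - Phi (v i)) l (nhds 0) := by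
  apply squeeze_zero_norm (a := fun i => |u i - v i|)
  · intro i; exact Phi_abs_sub_le _ _
  · simpa using h.abs

lemma log_part_nonneg {g : ℝ} (hg : 0 < g) : 0 ≤ (g^2 - 1) * Real.log (g^2) := by
  rcases le_total 1 (g^2) with h | h
  · exact mul_nonneg (by linarith) (Real.log_nonneg h)
  · exact mul_nonneg_of_nonpos_of_nonpos (by linarith) (Real.log_nonpos (by positivity) h)

lemma calE_tendsto_one {ι : Type*} {l : Filter ι} {r g : ι → ℝ} {r0 : ℝ} (hr0 : 0 ≤ r0)
    (hr : Tendsto r l (nhds r0)) (hg : Tendsto g l (nhds 1)) :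
    Tendsto (fun i => calE (r i) (g i)) l (nhds (calE r0 1)) := by
  have hval : calE r0 1 = Phi (-(|r0| / 2)) := by simp [calE]
  rw [hval]
  unfold calE
  refine Tendsto.if ?_ ?_
  · exact ((Phi_cont.tendsto _).comp ((hr.abs.div_const 2).neg)).mono_left inf_le_left
  set l' := l ⊓ 𝓟 {x | ¬ g x = 1}
  replace hr : Tendsto r l' (nhds r0) := hr.mono_left inf_le_left
  replace hg : Tendsto g l' (nhds 1) := hg.mono_left inf_le_left
  have hne : ∀ᶠ i in l', g i ≠ 1 := mem_inf_of_right (mem_principal_self _)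
  have hpos : ∀ᶠ i in l', 0 < g i := hg.eventually (lt_mem_nhds one_pos)
  set s : ι → ℝ := fun i => Real.sqrt ((r i)^2 + ((g i)^2 - 1) * Real.log ((g i)^2)) with hs
  have hlog : Tendsto (fun i => Real.log ((g i)^2)) l' (nhds 0) := by
    have := (hg.pow 2).log (by norm_num)
    simpa using this
  have hst : Tendsto s l' (nhds r0) := by
    have := ((hr.pow 2).add (((hg.pow 2).sub_const 1).mul hlog)).sqrt
    have e : Real.sqrt (r0 ^ 2 + (1 ^ 2 - 1) * 0) = r0 := by simp [Real.sqrt_sq hr0]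
    rw [e] at this
    exact this
  have hsq : ∀ᶠ i in l', s i ^ 2 = (r i)^2 + ((g i)^2 - 1) * Real.log ((g i)^2) := by
    filter_upwards [hpos] with i hi
    exact Real.sq_sqrt (add_nonneg (sq_nonneg _) (log_part_nonneg hi))
  have hfac : ∀ᶠ i in l', (g i)^2 - 1 ≠ 0 := by
    filter_upwards [hne, hpos] with i h1 h2 h3
    have : (g i - 1) * (g i + 1) = 0 := by linarith
    rcases mul_eq_zero.1 this with h | h
    · exact h1 (by linarith)
    · linarith
  have hCB : Tendsto (fun i => Phi ((r i * g i + s i) / ((g i)^2 - 1))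
      - Phi ((r i + g i * s i) / ((g i)^2 - 1))) l' (nhds 0) := by
    apply Phi_diff_tendsto
    have h : Tendsto (fun i => (r i - s i) / (g i + 1)) l' (nhds 0) := by
      have := (hr.sub hst).div (hg.add_const 1) (by norm_num)
      rw [sub_self, zero_div] at this
      exact this
    refine h.congr' ?_
    filter_upwards [hfac, hpos] with i h1 h2
    have : g i + 1 ≠ 0 := by linarith
    rw [← sub_div, div_eq_div_iff this h1]
    ring
  have hAD : Tendsto (fun i => Phi ((r i - g i * s i) / ((g i)^2 - 1))
      - Phi ((r i * g i - s i) / ((g i)^2 - 1))) l' (nhds (Phi (-(r0/2)) - Phi (r0/2))) := by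
    rcases hr0.eq_or_lt with h0 | h0
    · rw [← h0] at hr hst ⊢
      have : Phi (-(0/2)) - Phi (0/2) = 0 := by simp
      rw [this]
      apply Phi_diff_tendsto
      have h : Tendsto (fun i => -(r i + s i) / (g i + 1)) l' (nhds 0) := by
        have := ((hr.add hst).neg).div (hg.add_const 1) (by norm_num)
        rw [add_zero, neg_zero, zero_div] at this
        exact this
      refine h.congr' ?_
      filter_upwards [hfac, hpos] with i h1 h2
      have : g i + 1 ≠ 0 := by linarith
      rw [← sub_div, div_eq_div_iff this h1]
      ring
    · have hrp : ∀ᶠ i in l', 0 < r i := hr.eventually (lt_mem_nhds h0)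
      apply Tendsto.sub
      · apply (Phi_cont.tendsto _).comp
        have h : Tendsto (fun i => -((r i)^2 + (g i)^2 * Real.log ((g i)^2)) / (r i + g i * s i))
            l' (nhds (-(r0/2))) := by
          have := (((hr.pow 2).add ((hg.pow 2).mul hlog)).neg).div (hr.add (hg.mul hst))
            (by linarith)
          have e : -(r0 ^ 2 + 1 ^ 2 * 0) / (r0 + 1 * r0) = -(r0 / 2) := by
            field_simp; ring
          rw [e] at this
          exact this
        refine h.congr' ?_
        filter_upwards [hfac, hpos, hrp, hsq] with i h1 h2 h3 h4
        have h5 : 0 ≤ s i := Real.sqrt_nonneg _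
        have : r i + g i * s i ≠ 0 := by positivity
        rw [div_eq_div_iff this h1]
        linear_combination (g i)^2 * h4
      · apply (Phi_cont.tendsto _).comp
        have h : Tendsto (fun i => ((r i)^2 - Real.log ((g i)^2)) / (r i * g i + s i))
            l' (nhds (r0/2)) := by
          have := ((hr.pow 2).sub hlog).div ((hr.mul hg).add hst) (by linarith)
          have e : (r0 ^ 2 - 0) / (r0 * 1 + r0) = r0 / 2 := by
            field_simp; ring
          rw [e] at this
          exact this
        refine h.congr' ?_
        filter_upwards [hfac, hpos, hrp, hsq] with i h1 h2 h3 h4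
        have h5 : 0 ≤ s i := Real.sqrt_nonneg _
        have : r i * g i + s i ≠ 0 := by positivity
        rw [div_eq_div_iff this h1]
        linear_combination h4
  have hfin := ((hAD.const_mul (1/2)).add (hCB.const_mul (1/2))).const_add (1/2)
  have hv : 1/2 + (1/2 * (Phi (-(r0/2)) - Phi (r0/2)) + 1/2 * 0) = Phi (-(|r0|/2)) := by
    rw [abs_of_nonneg hr0, Phi_neg]; ring
  rw [hv] at hfin
  refine hfin.congr ?_
  intro i
  simp only [hs]
  ring

lemma calE_tendsto {ι : Type*} {l : Filter ι} {r g : ι → ℝ} {r0 g0 : ℝ} (hg0 : 0 < g0)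
    (hr : Tendsto r l (nhds r0)) (hg : Tendsto g l (nhds g0)) :
    Tendsto (fun i => calE (r i) (g i)) l (nhds (calE r0 g0)) := by
  by_cases h : g0 = 1
  · subst h
    have := calE_tendsto_one (abs_nonneg r0) hr.abs hg
    simpa only [calE_abs] using this
  · have hne : ∀ᶠ i in l, g i ≠ 1 := hg.eventually_ne h
    have hfac : g0^2 - 1 ≠ 0 := by
      intro h3
      have : (g0 - 1) * (g0 + 1) = 0 := by linarith
      rcases mul_eq_zero.1 this with h' | h'
      · exact h (by linarith)
      · linarith
    have ha := (hg.pow 2).sub_const 1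
    have hs := ((hr.pow 2).add (ha.mul ((hg.pow 2).log (by positivity)))).sqrt
    have hP : ∀ {u : ι → ℝ} {u0 : ℝ}, Tendsto u l (nhds u0) →
        Tendsto (fun i => (1/2) * Phi (u i / ((g i)^2 - 1))) l
          (nhds ((1/2) * Phi (u0 / (g0^2 - 1)))) := fun hu =>
      ((Phi_cont.tendsto _).comp (hu.div ha hfac)).const_mul (1/2)
    have hfin := ((((hP (hr.sub (hg.mul hs))).const_add (1/2)).sub (hP (hr.add (hg.mul hs)))).add
      (hP ((hr.mul hg).add hs))).sub (hP ((hr.mul hg).sub hs))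
    have hv : calE r0 g0 = _ := if_neg h
    rw [hv]
    refine hfin.congr' ?_
    filter_upwards [hne] with i hi
    exact (if_neg hi).symm

/-- The classification error function E is continuous on ℝ^p \ {0}. -/
theorem Evec_continuousOn {p : ℕ} (hp : 1 ≤ p) (μ0 μ1 : Fin p → ℝ)
    (S0 S1 : Matrix (Fin p) (Fin p) ℝ) (h0 : S0.PosDef) (h1 : S1.PosDef) :
    ContinuousOn (Evec μ0 μ1 S0 S1) {α : Fin p → ℝ | α ≠ 0} := by
  intro α hα
  apply ContinuousAt.continuousWithinAt
  have hα' : α ≠ 0 := hα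
  have p0 : 0 < dotProduct α (S0.mulVec α) := by
    simpa using h0.dotProduct_mulVec_pos hα'
  have p1 : 0 < dotProduct α (S1.mulVec α) := by
    simpa using h1.dotProduct_mulVec_pos hα'
  have q0 := Real.sqrt_pos.2 p0
  have q1 := Real.sqrt_pos.2 p1
  have c : ∀ S : Matrix (Fin p) (Fin p) ℝ,
      Continuous (fun a : Fin p → ℝ => Real.sqrt (dotProduct a (S.mulVec a))) := by
    intro S
    exact (continuous_id.dotProduct (continuous_const.matrix_mulVec continuous_id)).sqrt
  have cm : ∀ μ : Fin p → ℝ, Continuous (fun a : Fin p → ℝ => dotProduct a μ) := fun μ =>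
    continuous_id.dotProduct continuous_const
  exact calE_tendsto (div_pos q0 q1)
    ((((cm μ0).sub (cm μ1)).tendsto α).div ((c S1).tendsto α) q1.ne')
    (((c S0).tendsto α).div ((c S1).tendsto α) q1.ne')
end

section
/- Suppose Σ₀ = Σ₁ = Σ is symmetric positive definite and μ₀ ≠ μ₁. Then for every nonzero α ∈ ℝ^p, E(α) = Φ(−|αᵀ(μ₀ − μ₁)| / (2·√(αᵀΣα))); a nonzero α minimizes E if and only if it maximizes the ratio (αᵀ(μ₀ − μ₁))² / (αᵀΣα); and the vector β = Σ⁻¹(μ₀ − μ₁) is such a minimizer, with E(β) = Φ(−(1/2)·√((μ₀ − μ₁)ᵀΣ⁻¹(μ₀ − μ₁))). -/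
open MeasureTheory ProbabilityTheory Matrix Filter Set

lemma quad_pos {p : ℕ} {S : Matrix (Fin p) (Fin p) ℝ} (hS : S.PosDef) {α : Fin p → ℝ}
    (hα : α ≠ 0) : 0 < dotProduct α (S.mulVec α) := by
  simpa using hS.dotProduct_mulVec_pos hα

lemma Evec_formula {p : ℕ} (μ0 μ1 : Fin p → ℝ)
    {S : Matrix (Fin p) (Fin p) ℝ} (hS : S.PosDef) {α : Fin p → ℝ} (hα : α ≠ 0) :
    Evec μ0 μ1 S S α =
      Phi (-(|dotProduct α (μ0 - μ1)| / (2 * Real.sqrt (dotProduct α (S.mulVec α))))) := by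
  have hs := Real.sqrt_pos.mpr (quad_pos hS hα)
  unfold Evec calE
  rw [if_pos (div_self hs.ne'), dotProduct_sub, abs_div, abs_of_pos hs, div_div, mul_comm 2]

lemma Evec_formula2 {p : ℕ} (μ0 μ1 : Fin p → ℝ)
    {S : Matrix (Fin p) (Fin p) ℝ} (hS : S.PosDef) {α : Fin p → ℝ} (hα : α ≠ 0) :
    Evec μ0 μ1 S S α =
      Phi (-(1/2 * Real.sqrt ((dotProduct α (μ0 - μ1))^2 / dotProduct α (S.mulVec α)))) := by
  rw [Evec_formula μ0 μ1 hS hα, Real.sqrt_div (sq_nonneg _), Real.sqrt_sq_eq_abs]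
  congr 2
  ring

lemma Evec_le_iff {p : ℕ} (μ0 μ1 : Fin p → ℝ)
    {S : Matrix (Fin p) (Fin p) ℝ} (hS : S.PosDef) {α γ : Fin p → ℝ} (hα : α ≠ 0) (hγ : γ ≠ 0) :
    Evec μ0 μ1 S S α ≤ Evec μ0 μ1 S S γ ↔
      (dotProduct γ (μ0 - μ1))^2 / dotProduct γ (S.mulVec γ) ≤
              (dotProduct α (μ0 - μ1))^2 / dotProduct α (S.mulVec α) := by
  rw [Evec_formula2 μ0 μ1 hS hα, Evec_formula2 μ0 μ1 hS hγ, Phi_strictMono.le_iff_le,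
    neg_le_neg_iff, mul_le_mul_iff_right₀ (by norm_num), Real.sqrt_le_sqrt_iff]
  exact div_nonneg (sq_nonneg _) (quad_pos hS hα).le

/-- LDA case: Σ₀ = Σ₁ = Σ, μ₀ ≠ μ₁.  Formula for E, characterization of minimizers as
maximizers of the Rayleigh-type ratio, and β = Σ⁻¹(μ₀ − μ₁) is a minimizer with the
stated minimal error. -/
theorem Evec_equal_cov {p : ℕ} (hp : 1 ≤ p) (μ0 μ1 : Fin p → ℝ)
    (S : Matrix (Fin p) (Fin p) ℝ) (hS : S.PosDef) (hμ : μ0 ≠ μ1) :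
    (∀ α : Fin p → ℝ, α ≠ 0 →
        Evec μ0 μ1 S S α =
          Phi (-(|dotProduct α (μ0 - μ1)| / (2 * Real.sqrt (dotProduct α (S.mulVec α)))))) ∧
    (∀ α : Fin p → ℝ, α ≠ 0 →
        ((∀ γ : Fin p → ℝ, γ ≠ 0 → Evec μ0 μ1 S S α ≤ Evec μ0 μ1 S S γ) ↔
          (∀ γ : Fin p → ℝ, γ ≠ 0 →
            (dotProduct γ (μ0 - μ1))^2 / dotProduct γ (S.mulVec γ) ≤
              (dotProduct α (μ0 - μ1))^2 / dotProduct α (S.mulVec α)))) ∧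
    (∀ α : Fin p → ℝ, α ≠ 0 →
        Evec μ0 μ1 S S (S⁻¹.mulVec (μ0 - μ1)) ≤ Evec μ0 μ1 S S α) ∧
    Evec μ0 μ1 S S (S⁻¹.mulVec (μ0 - μ1)) =
      Phi (-(1/2 * Real.sqrt (dotProduct (μ0 - μ1) (S⁻¹.mulVec (μ0 - μ1))))) := by
  have hd : μ0 - μ1 ≠ 0 := sub_ne_zero.mpr hμ
  have hdet : IsUnit S.det := (Matrix.isUnit_iff_isUnit_det S).mp hS.isUnit
  have hSb : S.mulVec (S⁻¹.mulVec (μ0 - μ1)) = μ0 - μ1 := by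
    rw [Matrix.mulVec_mulVec, Matrix.mul_nonsing_inv S hdet, Matrix.one_mulVec]
  set d := μ0 - μ1 with hddef
  set b := S⁻¹.mulVec d with hb
  have hb0 : b ≠ 0 := by
    intro h
    rw [h, Matrix.mulVec_zero] at hSb
    exact hd hSb.symm
  have hq : 0 < dotProduct b d := by
    have := quad_pos hS hb0
    rwa [hSb] at this
  have hT : Sᵀ = S := by simpa using hS.isHermitian.eq
  have hbS : ∀ α : Fin p → ℝ, dotProduct b (S.mulVec α) = dotProduct α d := by
    intro α
    rw [Matrix.dotProduct_mulVec, ← Matrix.mulVec_transpose, hT, hSb, dotProduct_comm]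
  have hratio : (dotProduct b d)^2 / dotProduct b (S.mulVec b) = dotProduct b d := by
    rw [hSb]
    field_simp
  have hcs : ∀ α : Fin p → ℝ, α ≠ 0 →
      (dotProduct α d)^2 / dotProduct α (S.mulVec α) ≤ dotProduct b d := by
    intro α hα
    rw [div_le_iff₀ (quad_pos hS hα)]
    have h0 : 0 ≤ dotProduct (dotProduct α d • b - dotProduct b d • α)
        (S.mulVec (dotProduct α d • b - dotProduct b d • α)) := by
      simpa using hS.posSemidef.dotProduct_mulVec_nonneg
        (dotProduct α d • b - dotProduct b d • α)
    simp only [Matrix.mulVec_sub, Matrix.mulVec_smul, sub_dotProduct, dotProduct_sub,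
      smul_dotProduct, dotProduct_smul, smul_eq_mul, hSb, hbS] at h0
    have h1 : 0 ≤ dotProduct b d *
        (dotProduct b d * dotProduct α (S.mulVec α) - (dotProduct α d)^2) := by
      linarith
    have := nonneg_of_mul_nonneg_right h1 hq
    linarith
  refine ⟨fun α hα => Evec_formula μ0 μ1 hS hα, fun α hα => ?_, fun α hα => ?_, ?_⟩
  · exact forall₂_congr fun γ hγ => Evec_le_iff μ0 μ1 hS hα hγ
  · rw [Evec_le_iff μ0 μ1 hS hb0 hα, ← hddef, hratio]
    exact hcs α hα
  · rw [Evec_formula2 μ0 μ1 hS hb0, ← hddef, hratio, dotProduct_comm d b]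
end
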